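/- Let d, d_B ≥ 1 and let N be a quantum channel from d×d matrices to d_B×d_B matrices. Let G be a finite set and for each g ∈ G let U^g be a d×d unitary and V^g a d_B×d_B unitary such that (i) (1/|G|) ∑_g U^g X (U^g)† = (Tr X)·1_d/d for every d×d matrix X (the input representation is a unitary one-design), and (ii) N(U^g ρ (U^g)†) = V^g N(ρ) (V^g)† for all ρ and g (covariance). Let Φ be the maximally entangled state on ℂ^d ⊗ ℂ^d and set ω^g = (id ⊗ N)((1 ⊗ U^g) Φ (1 ⊗ U^g)†) for each g ∈ G. Then for every probability distribution p on G, the Holevo information satisfies S(∑_g p(g) ω^g) − ∑_g p(g) S(ω^g) ≤ log₂ d + S(N(1_d/d)) − S((id ⊗ N)(Φ)), and equality holds when p is the uniform distribution. (The right-hand side equals the quantum mutual information I(R;B) of the Choi state (id ⊗ N)(Φ), which is the entanglement-assisted classical capacity of N; hence the quantum reading capacity of the jointly covariant memory cell {N ∘ U^g}_{g∈G} equals I(R;B)_{N(Φ)}.) -/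

import Mathlib

open Matrix Kronecker
open scoped ComplexOrder

noncomputable section

/-- A density matrix: positive semidefinite with unit trace. -/
def DensityMatrix {n : Type*} [Fintype n] (ρ : Matrix n n ℂ) : Prop :=
  ρ.PosSemidef ∧ ρ.trace = 1

/-- The von Neumann entropy (base 2) of a matrix, via its eigenvalues. -/
def entropy {n : Type*} [Fintype n] [DecidableEq n] (ρ : Matrix n n ℂ) : ℝ :=
  if h : ρ.IsHermitian then (∑ i, Real.negMulLog (h.eigenvalues i)) / Real.log 2 else 0

/-- The extension `id_r ⊗ N` of a linear map `N` on matrices, acting on matrices with an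
extra (left) tensor factor `r`. -/
def idTensor {m n r : Type*} (N : Matrix m m ℂ →ₗ[ℂ] Matrix n n ℂ)
    (ρ : Matrix (r × m) (r × m) ℂ) : Matrix (r × n) (r × n) ℂ :=
  Matrix.of fun p q => N (Matrix.of fun x y => ρ (p.1, x) (q.1, y)) p.2 q.2

/-- A quantum channel: a trace-preserving and completely positive linear map on matrices. -/
def IsQuantumChannel {m n : Type*} [Fintype m] [Fintype n]
    (N : Matrix m m ℂ →ₗ[ℂ] Matrix n n ℂ) : Prop :=
  (∀ X, (N X).trace = X.trace) ∧
  ∀ (k : ℕ) (ρ : Matrix (Fin k × m) (Fin k × m) ℂ), ρ.PosSemidef → (idTensor N ρ).PosSemidef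

/-- The maximally entangled state of Schmidt rank `d` on `ℂ^d ⊗ ℂ^d`. -/
def maxEntSq (d : ℕ) : Matrix (Fin d × Fin d) (Fin d × Fin d) ℂ :=
  Matrix.of fun p q => if p.2 = p.1 ∧ q.2 = q.1 then ((d : ℂ))⁻¹ else 0

theorem ent_core {n : Type*} [Fintype n] [DecidableEq n] (W : Matrix n n ℂ)
    (hW : W ∈ Matrix.unitaryGroup n ℂ) (x : n → ℝ) (hx : ∀ i, 0 ≤ x i)
    (ρ : Matrix n n ℂ) (hρ : ρ = W * diagonal (fun i => (x i : ℂ)) * Wᴴ) :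
    ∑ i, Real.negMulLog (x i) ≤ ∑ i, Real.negMulLog (ρ i i).re := by
  have hd : ∀ i, (ρ i i).re = ∑ j, Complex.normSq (W i j) * x j := by
    intro i
    rw [hρ, Matrix.mul_apply, Complex.re_sum]
    refine Finset.sum_congr rfl fun j _ => ?_
    rw [Matrix.mul_diagonal, conjTranspose_apply]
    simp [Complex.normSq_apply]
    ring
  have h1 : ∀ i, ∑ j, Complex.normSq (W i j) = 1 := by
    intro i
    have h := congrFun (congrFun (Matrix.mem_unitaryGroup_iff.1 hW) i) i
    rw [Matrix.mul_apply, Matrix.one_apply_eq] at h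
    have h' := congrArg Complex.re h
    rw [Complex.re_sum] at h'
    rw [← Complex.one_re, ← h']
    refine Finset.sum_congr rfl fun j _ => ?_
    simp [Matrix.star_apply, Complex.normSq_apply]
  have h2 : ∀ j, ∑ i, Complex.normSq (W i j) = 1 := by
    intro i
    have h := congrFun (congrFun (Matrix.mem_unitaryGroup_iff'.1 hW) i) i
    rw [Matrix.mul_apply, Matrix.one_apply_eq] at h
    have h' := congrArg Complex.re h
    rw [Complex.re_sum] at h'
    rw [← Complex.one_re, ← h']
    refine Finset.sum_congr rfl fun j _ => ?_
    simp [Matrix.star_apply, Complex.normSq_apply]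
  calc ∑ j, Real.negMulLog (x j)
      = ∑ j, ∑ i, Complex.normSq (W i j) * Real.negMulLog (x j) := by
        refine Finset.sum_congr rfl fun j _ => ?_
        rw [← Finset.sum_mul, h2, one_mul]
    _ = ∑ i, ∑ j, Complex.normSq (W i j) * Real.negMulLog (x j) := Finset.sum_comm
    _ ≤ _ := by
        refine Finset.sum_le_sum fun i _ => ?_
        rw [hd]
        have := Real.concaveOn_negMulLog.le_map_sum (t := Finset.univ)
          (w := fun j => Complex.normSq (W i j)) (p := x)
          (fun j _ => Complex.normSq_nonneg _) (h1 i) (fun j _ => hx j)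
        simpa using this

theorem ent_exists {n : Type*} [Fintype n] [DecidableEq n] (ρ : Matrix n n ℂ)
    (h : ρ.PosSemidef) : ∃ W ∈ Matrix.unitaryGroup n ℂ, ∃ x : n → ℝ, (∀ i, 0 ≤ x i) ∧
      ρ = W * diagonal (fun i => (x i : ℂ)) * Wᴴ ∧
      entropy ρ = (∑ i, Real.negMulLog (x i)) / Real.log 2 := by
  refine ⟨h.1.eigenvectorUnitary, h.1.eigenvectorUnitary.2, h.1.eigenvalues,
    h.eigenvalues_nonneg, ?_, ?_⟩
  · have := h.1.spectral_theorem
    rw [Unitary.conjStarAlgAut_apply] at this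
    exact this
  · simp [entropy, h.1]

theorem ent_le {n : Type*} [Fintype n] [DecidableEq n] (ρ F : Matrix n n ℂ)
    (h : ρ.PosSemidef) (hF : F ∈ Matrix.unitaryGroup n ℂ) :
    entropy ρ ≤ (∑ i, Real.negMulLog ((Fᴴ * ρ * F) i i).re) / Real.log 2 := by
  obtain ⟨W, hW, x, hx, hρ, he⟩ := ent_exists ρ h
  rw [he]
  have h2 : 0 < Real.log 2 := Real.log_pos (by norm_num)
  refine div_le_div_of_nonneg_right ?_ h2.le
  refine ent_core (Fᴴ * W) (mul_mem (Unitary.star_mem hF) hW) x hx _ ?_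
  rw [hρ, conjTranspose_mul, conjTranspose_conjTranspose]
  simp only [Matrix.mul_assoc]

theorem ent_eq {n : Type*} [Fintype n] [DecidableEq n] (ρ W : Matrix n n ℂ)
    (hW : W ∈ Matrix.unitaryGroup n ℂ) (x : n → ℝ) (hx : ∀ i, 0 ≤ x i)
    (hρ : ρ = W * diagonal (fun i => (x i : ℂ)) * Wᴴ) :
    entropy ρ = (∑ i, Real.negMulLog (x i)) / Real.log 2 := by
  have hps : ρ.PosSemidef := by
    rw [hρ]
    refine Matrix.PosSemidef.mul_mul_conjTranspose_same ?_ W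
    exact Matrix.PosSemidef.diagonal (fun i => by simpa using hx i)
  have hWW : Wᴴ * W = 1 := Matrix.mem_unitaryGroup_iff'.1 hW
  apply le_antisymm
  · refine (ent_le ρ W hps hW).trans_eq ?_
    have : Wᴴ * ρ * W = diagonal (fun i => (x i : ℂ)) := by
      rw [hρ]
      calc _ = (Wᴴ * W) * diagonal (fun i => (x i : ℂ)) * (Wᴴ * W) := by
            simp only [Matrix.mul_assoc]
        _ = _ := by rw [hWW]; simp
    rw [this]
    simp
  · obtain ⟨E, hE, y, hy, hρ', he⟩ := ent_exists ρ hps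
    rw [he]
    have hEE : Eᴴ * E = 1 := Matrix.mem_unitaryGroup_iff'.1 hE
    have h2 : 0 < Real.log 2 := Real.log_pos (by norm_num)
    refine div_le_div_of_nonneg_right ?_ h2.le
    have := ent_core (Eᴴ * W) (mul_mem (Unitary.star_mem hE) hW) x hx
      (diagonal (fun i => (y i : ℂ))) (by
        calc _ = (Eᴴ * E) * diagonal (fun i => (y i : ℂ)) * (Eᴴ * E) := by rw [hEE]; simp
          _ = Eᴴ * (E * diagonal (fun i => (y i : ℂ)) * Eᴴ) * E := by
            simp only [Matrix.mul_assoc]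
          _ = _ := by
            rw [← hρ', hρ, conjTranspose_mul, conjTranspose_conjTranspose]
            simp only [Matrix.mul_assoc])
    simpa using this

theorem ent_conj {n : Type*} [Fintype n] [DecidableEq n] (ρ F : Matrix n n ℂ)
    (h : ρ.PosSemidef) (hF : F ∈ Matrix.unitaryGroup n ℂ) :
    entropy (F * ρ * Fᴴ) = entropy ρ := by
  obtain ⟨W, hW, x, hx, hρ, he⟩ := ent_exists ρ h
  rw [he]
  refine ent_eq _ (F * W) (mul_mem hF hW) x hx ?_
  rw [hρ, conjTranspose_mul]
  simp only [Matrix.mul_assoc]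

theorem blk_conj {r m n : Type*} [Fintype r] [DecidableEq r] [Fintype m] [Fintype n]
    (A : Matrix n m ℂ) (ρ : Matrix (r × m) (r × m) ℂ) (a b : r) :
    (Matrix.of fun x y => (((1 : Matrix r r ℂ) ⊗ₖ A) * ρ * ((1 : Matrix r r ℂ) ⊗ₖ A)ᴴ)
        (a, x) (b, y))
      = A * (Matrix.of fun x y => ρ (a, x) (b, y)) * Aᴴ := by
  ext x y
  simp [Matrix.mul_apply, Fintype.sum_prod_type, Matrix.one_apply, ite_mul, 
    Finset.sum_ite_eq, apply_ite, Finset.sum_mul]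

theorem one_kron_mem {r m : Type*} [Fintype r] [DecidableEq r] [Fintype m] [DecidableEq m]
    (A : Matrix m m ℂ) (hA : A ∈ Matrix.unitaryGroup m ℂ) :
    ((1 : Matrix r r ℂ) ⊗ₖ A) ∈ Matrix.unitaryGroup (r × m) ℂ := by
  rw [Matrix.mem_unitaryGroup_iff, star_eq_conjTranspose, conjTranspose_kronecker,
    ← Matrix.mul_kronecker_mul, ← star_eq_conjTranspose A, Matrix.mem_unitaryGroup_iff.1 hA]
  simp

theorem maxEnt_psd (d : ℕ) : (maxEntSq d).PosSemidef := by
  have : maxEntSq d = ((d : ℂ)⁻¹) • Matrix.vecMulVec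
      (fun p : Fin d × Fin d => if p.2 = p.1 then (1 : ℂ) else 0)
      (star (fun p : Fin d × Fin d => if p.2 = p.1 then (1 : ℂ) else 0)) := by
    ext p q
    by_cases h1 : p.2 = p.1 <;> by_cases h2 : q.2 = q.1 <;>
      simp [maxEntSq, Matrix.vecMulVec_apply, h1, h2]
  rw [this]
  refine Matrix.PosSemidef.smul (Matrix.posSemidef_vecMulVec_self_star _) ?_
  have : (0 : ℝ) ≤ (d : ℝ)⁻¹ := by positivity
  have h' := Complex.zero_le_real.2 this
  rwa [Complex.ofReal_inv, Complex.ofReal_natCast] at h'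

/-- subadditivity-type bound -/
theorem jens (d : ℕ) (hd : 0 < d) (q : Fin d → ℝ) (hq : ∀ k, 0 ≤ q k) :
    ∑ k, Real.negMulLog (q k) ≤ d * Real.negMulLog ((∑ k, q k) / d) := by
  have hd' : (0 : ℝ) < d := by exact_mod_cast hd
  have := Real.concaveOn_negMulLog.le_map_sum (t := Finset.univ)
          (w := fun _ : Fin d => (d : ℝ)⁻¹) (p := q)
          (fun j _ => by positivity) (by simp [hd'.ne']) (fun j _ => hq j)
  simp only [smul_eq_mul, ← Finset.mul_sum] at this
  rw [div_eq_inv_mul]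
  calc _ = (d : ℝ) * ((d : ℝ)⁻¹ * ∑ k, Real.negMulLog (q k)) := by field_simp
    _ ≤ _ := by gcongr

theorem eta_div (d : ℕ) (hd : 0 < d) (m : ℝ) :
    d * Real.negMulLog (m / d) = Real.negMulLog m + m * Real.log d := by
  have hd' : (d : ℝ) ≠ 0 := by exact_mod_cast hd.ne'
  rcases eq_or_ne m 0 with rfl | hm
  · simp
  · simp only [Real.negMulLog, Real.log_div hm hd']
    field_simp
    ring

theorem phi_blk (d : ℕ) (a b : Fin d) :
    (Matrix.of fun x y => maxEntSq d (a, x) (b, y))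
      = (d : ℂ)⁻¹ • Matrix.single a b (1 : ℂ) := by
  ext x y
  simp [maxEntSq, Matrix.single_apply, eq_comm]

theorem sum_phi_blk (d : ℕ) :
    ∑ a, (Matrix.of fun x y => maxEntSq d (a, x) (a, y))
      = (d : ℂ)⁻¹ • (1 : Matrix (Fin d) (Fin d) ℂ) := by
  simp only [phi_blk, ← Finset.smul_sum]
  congr 1
  ext x y
  rw [Matrix.sum_apply, Finset.sum_eq_single x]
  · simp [Matrix.single_apply, Matrix.one_apply]
  · intro b _ hb
    simp [Matrix.single_apply, hb]
  · simp

/-- if the diagonal blocks sum to `τ` of trace one, then `S(ρ) ≤ log d + S(τ)`. -/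
theorem subadd {d dB : ℕ} (hd : 0 < d)
    (ρ : Matrix (Fin d × Fin dB) (Fin d × Fin dB) ℂ) (hρ : ρ.PosSemidef)
    (τ : Matrix (Fin dB) (Fin dB) ℂ) (hτ : τ.PosSemidef) (ht : τ.trace = 1)
    (hs : ∑ a, (Matrix.of fun x y => ρ (a, x) (a, y)) = τ) :
    entropy ρ ≤ Real.logb 2 d + entropy τ ∧
    (ρ = ((d : ℂ)⁻¹ • (1 : Matrix (Fin d) (Fin d) ℂ)) ⊗ₖ τ →
      entropy ρ = Real.logb 2 d + entropy τ) := by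
  obtain ⟨F, hF, μ, hμ, hτF, he⟩ := ent_exists τ hτ
  have hFF : Fᴴ * F = 1 := Matrix.mem_unitaryGroup_iff'.1 hF
  have h2 : 0 < Real.log 2 := Real.log_pos (by norm_num)
  have hμ1 : ∑ j, μ j = 1 := by
    rw [hτF, Matrix.trace_mul_comm, ← Matrix.mul_assoc, hFF, Matrix.one_mul,
      Matrix.trace_diagonal] at ht
    exact_mod_cast ht
  have hkey : Real.logb 2 d + entropy τ
      = (∑ j, (d : ℝ) * Real.negMulLog (μ j / d)) / Real.log 2 := by
    simp only [eta_div d hd, Finset.sum_add_distrib, ← Finset.sum_mul, hμ1, he, Real.logb]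
    ring
  rw [hkey]
  constructor
  · refine (ent_le ρ _ hρ (one_kron_mem F hF)).trans ?_
    refine div_le_div_of_nonneg_right ?_ h2.le
    set σ := ((1 : Matrix (Fin d) (Fin d) ℂ) ⊗ₖ F)ᴴ * ρ * ((1 : Matrix (Fin d) (Fin d) ℂ) ⊗ₖ F)
      with hσ
    have hσp : σ.PosSemidef := hρ.conjTranspose_mul_mul_same _
    have hb : ∀ a, (Matrix.of fun x y => σ (a, x) (a, y))
        = Fᴴ * (Matrix.of fun x y => ρ (a, x) (a, y)) * F := by
      intro a
      have := blk_conj Fᴴ ρ a a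
      simpa [hσ, conjTranspose_kronecker] using this
    have hsum : ∀ j, ∑ k, (σ (k, j) (k, j)).re = μ j := by
      intro j
      have h3 : ∑ a, (Matrix.of fun x y => σ (a, x) (a, y))
          = diagonal (fun i => (μ i : ℂ)) := by
        simp only [hb]
        rw [← Finset.sum_mul, ← Finset.mul_sum, hs, hτF]
        calc _ = (Fᴴ * F) * diagonal (fun i => (μ i : ℂ)) * (Fᴴ * F) := by
              simp only [Matrix.mul_assoc]
          _ = _ := by rw [hFF]; simp
      have h4 := congrArg Complex.re (congrFun (congrFun h3 j) j)
      simpa [Matrix.sum_apply] using h4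
    rw [Fintype.sum_prod_type, Finset.sum_comm]
    refine Finset.sum_le_sum fun j _ => ?_
    rw [← hsum]
    exact jens d hd _ fun k => (Complex.le_def.1 hσp.diag_nonneg).1
  · intro h
    rw [ent_eq ρ ((1 : Matrix (Fin d) (Fin d) ℂ) ⊗ₖ F) (one_kron_mem F hF)
      (fun p => μ p.2 / d) (fun p => div_nonneg (hμ _) (by positivity)), Fintype.sum_prod_type]
    · simp [Finset.mul_sum]
    · rw [h, hτF, conjTranspose_kronecker]
      have : (diagonal fun p : Fin d × Fin dB => ((μ p.2 / d : ℝ) : ℂ))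
          = ((d : ℂ)⁻¹ • (1 : Matrix (Fin d) (Fin d) ℂ)) ⊗ₖ diagonal (fun i => (μ i : ℂ)) := by
        rw [← Matrix.diagonal_one, ← Matrix.diagonal_smul, Matrix.diagonal_kronecker_diagonal]
        congr 1
        ext p
        simp
        ring
      rw [this, ← Matrix.mul_kronecker_mul, ← Matrix.mul_kronecker_mul]
      simp

/-- for a covariant channel `N` whose input representation is a unitary
one-design, the Holevo information of the ensemble `{p(g), (id ⊗ N)((1 ⊗ U^g)Φ(1 ⊗ U^g)†)}`
is at most `log₂ d + S(N(1/d)) − S((id ⊗ N)(Φ))`, with equality for the uniform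
distribution. -/
theorem stmt6 {d dB : ℕ}
    (N : Matrix (Fin d) (Fin d) ℂ →ₗ[ℂ] Matrix (Fin dB) (Fin dB) ℂ)
    (hN : IsQuantumChannel N)
    {G : Type*} [Fintype G]
    (U : G → Matrix (Fin d) (Fin d) ℂ) (V : G → Matrix (Fin dB) (Fin dB) ℂ)
    (hU : ∀ g, U g ∈ Matrix.unitaryGroup (Fin d) ℂ)
    (hV : ∀ g, V g ∈ Matrix.unitaryGroup (Fin dB) ℂ)
    (hdesign : ∀ X : Matrix (Fin d) (Fin d) ℂ,
      ((Fintype.card G : ℂ))⁻¹ • ∑ g, U g * X * (U g)ᴴ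
        = (X.trace / (d : ℂ)) • (1 : Matrix (Fin d) (Fin d) ℂ))
    (hcov : ∀ (ρ : Matrix (Fin d) (Fin d) ℂ) (g : G),
      N (U g * ρ * (U g)ᴴ) = V g * N ρ * (V g)ᴴ)
    (p : G → ℝ) (hp0 : ∀ g, 0 ≤ p g) (hp1 : ∑ g, p g = 1) :
    (entropy (∑ g, p g •
          idTensor N (((1 : Matrix (Fin d) (Fin d) ℂ) ⊗ₖ U g) * maxEntSq d *
            (((1 : Matrix (Fin d) (Fin d) ℂ) ⊗ₖ U g))ᴴ))
        - ∑ g, p g * entropy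
            (idTensor N (((1 : Matrix (Fin d) (Fin d) ℂ) ⊗ₖ U g) * maxEntSq d *
              (((1 : Matrix (Fin d) (Fin d) ℂ) ⊗ₖ U g))ᴴ))
      ≤ Real.logb 2 d + entropy (N (((d : ℂ))⁻¹ • (1 : Matrix (Fin d) (Fin d) ℂ)))
          - entropy (idTensor N (maxEntSq d))) ∧
    ((∀ g, p g = ((Fintype.card G : ℝ))⁻¹) →
      (entropy (∑ g, p g •
            idTensor N (((1 : Matrix (Fin d) (Fin d) ℂ) ⊗ₖ U g) * maxEntSq d *
              (((1 : Matrix (Fin d) (Fin d) ℂ) ⊗ₖ U g))ᴴ))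
          - ∑ g, p g * entropy
              (idTensor N (((1 : Matrix (Fin d) (Fin d) ℂ) ⊗ₖ U g) * maxEntSq d *
                (((1 : Matrix (Fin d) (Fin d) ℂ) ⊗ₖ U g))ᴴ))
        = Real.logb 2 d + entropy (N (((d : ℂ))⁻¹ • (1 : Matrix (Fin d) (Fin d) ℂ)))
            - entropy (idTensor N (maxEntSq d)))) := by
  have hps : ∀ g, (idTensor N (((1 : Matrix (Fin d) (Fin d) ℂ) ⊗ₖ U g) * maxEntSq d *
            (((1 : Matrix (Fin d) (Fin d) ℂ) ⊗ₖ U g))ᴴ)).PosSemidef := fun g =>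
    hN.2 d _ ((maxEnt_psd d).mul_mul_conjTranspose_same _)
  have hω : ∀ g, idTensor N (((1 : Matrix (Fin d) (Fin d) ℂ) ⊗ₖ U g) * maxEntSq d *
            (((1 : Matrix (Fin d) (Fin d) ℂ) ⊗ₖ U g))ᴴ)
      = ((1 : Matrix (Fin d) (Fin d) ℂ) ⊗ₖ V g) * idTensor N (maxEntSq d) *
            (((1 : Matrix (Fin d) (Fin d) ℂ) ⊗ₖ V g))ᴴ := by
    intro g
    ext ⟨a, x⟩ ⟨b, y⟩
    have h1 := congrFun (congrFun (blk_conj (V g) (idTensor N (maxEntSq d)) a b) x) y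
    rw [Matrix.of_apply] at h1
    rw [h1]
    change N (Matrix.of fun x y => _) x y = _
    rw [blk_conj, hcov]
    rfl
  have hωe : ∀ g, entropy (idTensor N (((1 : Matrix (Fin d) (Fin d) ℂ) ⊗ₖ U g) * maxEntSq d *
            (((1 : Matrix (Fin d) (Fin d) ℂ) ⊗ₖ U g))ᴴ)) = entropy (idTensor N (maxEntSq d)) := by
    intro g
    rw [hω, ent_conj _ _ (hN.2 d _ (maxEnt_psd d)) (one_kron_mem _ (hV g))]
  simp only [hωe, ← Finset.sum_mul, hp1, one_mul]
  rcases Nat.eq_zero_or_pos d with hd | hd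
  · subst hd
    have h0 : ((((0 : ℕ) : ℂ))⁻¹ • (1 : Matrix (Fin 0) (Fin 0) ℂ)) = 0 := Subsingleton.elim _ _
    have h1 : entropy (0 : Matrix (Fin dB) (Fin dB) ℂ) = 0 := by
      rw [ent_eq 0 1 (one_mem _) (fun _ => 0) (fun _ => le_rfl) (by simp)]
      simp
    have h2 : ∀ ρ : Matrix (Fin 0 × Fin dB) (Fin 0 × Fin dB) ℂ, entropy ρ = 0 := by
      intro ρ
      unfold entropy
      split_ifs <;> simp
    rw [h0, map_zero, h1, h2, h2]
    simp
  have hdC : (d : ℂ) ≠ 0 := by exact_mod_cast hd.ne'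
  have hρp : (∑ g, p g • idTensor N (((1 : Matrix (Fin d) (Fin d) ℂ) ⊗ₖ U g) * maxEntSq d *
            (((1 : Matrix (Fin d) (Fin d) ℂ) ⊗ₖ U g))ᴴ)).PosSemidef :=
    Matrix.posSemidef_sum _ fun g _ => (hps g).smul (hp0 g)
  have hblk : ∀ a b, (Matrix.of fun x y => (∑ g, p g •
        idTensor N (((1 : Matrix (Fin d) (Fin d) ℂ) ⊗ₖ U g) * maxEntSq d *
            (((1 : Matrix (Fin d) (Fin d) ℂ) ⊗ₖ U g))ᴴ)) (a, x) (b, y))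
      = ∑ g, p g • N (U g * (Matrix.of fun x y => maxEntSq d (a, x) (b, y)) * (U g)ᴴ) := by
    intro a b
    ext x y
    rw [Matrix.of_apply, Matrix.sum_apply, Matrix.sum_apply]
    refine Finset.sum_congr rfl fun g _ => ?_
    rw [Matrix.smul_apply, Matrix.smul_apply, ← blk_conj]
    rfl
  have hs : ∑ a, (Matrix.of fun x y => (∑ g, p g •
        idTensor N (((1 : Matrix (Fin d) (Fin d) ℂ) ⊗ₖ U g) * maxEntSq d *
            (((1 : Matrix (Fin d) (Fin d) ℂ) ⊗ₖ U g))ᴴ)) (a, x) (a, y))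
      = N (((d : ℂ))⁻¹ • (1 : Matrix (Fin d) (Fin d) ℂ)) := by
    simp only [hblk]
    rw [Finset.sum_comm]
    have : ∀ g, ∑ a, p g • N (U g * (Matrix.of fun x y => maxEntSq d (a, x) (a, y)) * (U g)ᴴ)
        = p g • N (((d : ℂ))⁻¹ • (1 : Matrix (Fin d) (Fin d) ℂ)) := by
      intro g
      rw [← Finset.smul_sum, ← map_sum, ← Finset.sum_mul, ← Finset.mul_sum, sum_phi_blk]
      have hu : U g * (U g)ᴴ = 1 := Matrix.mem_unitaryGroup_iff.1 (hU g)
      simp [hu]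
    simp only [this]
    rw [← Finset.sum_smul, hp1, one_smul]
  have hτp : (N (((d : ℂ))⁻¹ • (1 : Matrix (Fin d) (Fin d) ℂ))).PosSemidef := by
    rw [← hs]
    exact Matrix.posSemidef_sum _ fun a _ => hρp.submatrix (fun x => (a, x))
  have hτt : (N (((d : ℂ))⁻¹ • (1 : Matrix (Fin d) (Fin d) ℂ))).trace = 1 := by
    rw [hN.1]
    simp [hdC]
  obtain ⟨hle, heq⟩ := subadd hd _ hρp _ hτp hτt hs
  refine ⟨by linarith, fun hpu => ?_⟩
  rw [heq]
  ext ⟨a, x⟩ ⟨b, y⟩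
  have h1 := congrFun (congrFun (hblk a b) x) y
  rw [Matrix.of_apply] at h1
  rw [h1]
  have h2 : ∑ g, p g • N (U g * (Matrix.of fun x y => maxEntSq d (a, x) (b, y)) * (U g)ᴴ)
      = ((d : ℂ)⁻¹ * (1 : Matrix (Fin d) (Fin d) ℂ) a b) •
        N (((d : ℂ))⁻¹ • (1 : Matrix (Fin d) (Fin d) ℂ)) := by
    have h3 := congrArg N (hdesign (Matrix.of fun x y => maxEntSq d (a, x) (b, y)))
    rw [map_smul, map_sum, map_smul, phi_blk] at h3
    simp only [hpu]
    rw [← Finset.smul_sum, phi_blk, map_smul, smul_smul]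
    have h4 : ∀ M : Matrix (Fin dB) (Fin dB) ℂ, ((Fintype.card G : ℝ))⁻¹ • M
        = ((Fintype.card G : ℂ))⁻¹ • M := by
      intro M
      ext i j
      simp
    rw [h4, h3]
    congr 1
    rw [Matrix.trace_smul, div_eq_mul_inv, smul_eq_mul]
    congr 2
    by_cases hab : a = b
    · subst hab; simp
    · simp [hab]
  rw [h2]
  simp [Matrix.kroneckerMap_apply]
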